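/- arXiv:1409.8369 — 2 statements merged into one kernel-verified Lean document; each statement's English description precedes it below -/
import Mathlib

section
/- Let t ∈ ℂ with t³ ≠ −27, and let c_t := z_1³ + z_2³ + z_3³ + t·z_1z_2z_3 ∈ ℂ[z_1,z_2,z_3]. Let J_t be the ideal generated by the partial derivatives 3z_1² + t·z_2z_3, 3z_2² + t·z_1z_3, 3z_3² + t·z_1z_2, and let H_t be the determinant of the 3×3 Hessian matrix of c_t. Then: every monomial z_1^{i_1}z_2^{i_2}z_3^{i_3} of degree 3 other than z_1³, z_2³, z_3³, z_1z_2z_3 lies in J_t; z_i³ + (t/(24(t³+27)))·H_t ∈ J_t for i = 1,2,3; and z_1z_2z_3 − (1/(8(t³+27)))·H_t ∈ J_t. Consequently the associated form of c_t is 𝐜_t = −(1/(24(t³+27)))·(t·z_1³ + t·z_2³ + t·z_3³ − 18·z_1z_2z_3). -/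
/-!
Write `x, y, z` for the variables and `D = t³ + 27`. Modulo `J_t` one has `x² ≡ -(t/3) yz` and its
cyclic analogues. Applying these three times sends `x²y` to `-(t³/27) x²y`, so `D x²y ∈ J_t`, and
`D ≠ 0` gives `x²y ∈ J_t`; the other mixed monomials follow by symmetry. Likewise
`x³ ≡ y³ ≡ z³ ≡ -(t/3) xyz`, and the Hessian
`(216 + 2t³) xyz - 6t² (x³ + y³ + z³)` reduces to `8D xyz`, which gives the remaining relations.

The scalars `μ_I` are unique because `H_t ∉ J_t`: the third-order functional
`p ↦ (18 ∂x∂y∂z - t (∂x³ + ∂y³ + ∂z³)) p (0)` kills `J_t` (`socle_eq_zero_of_mem`) but takes the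
value `144 D` on `H_t` (`socle_hess3`). The associated form is then read off coefficient by
coefficient.
-/

open MvPolynomial

noncomputable section

/-- Ternary forms: polynomials in three variables over ℂ. -/
abbrev P3 := MvPolynomial (Fin 3) ℂ

/-- The Hessian determinant of a ternary form. -/
def hess3 (f : P3) : P3 := (Matrix.of fun i j => pderiv i (pderiv j f)).det

/-- The Jacobian ideal `J(f) = (f_1, f_2, f_3)`. -/
def jac3 (f : P3) : Ideal P3 := Ideal.span {pderiv 0 f, pderiv 1 f, pderiv 2 f}

/-- The associated cubic `A_f := Σ_{|I|=3} (6/(i_1!i_2!i_3!))·μ_I·z^I`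
built from scalars `μ_I`. -/
def assocCubic (μ : (Fin 3 → ℕ) → ℂ) : P3 :=
  ∑ I ∈ Finset.Nat.antidiagonalTuple 3 3,
    MvPolynomial.C ((6 : ℂ) / ∏ i, ((I i).factorial : ℂ)) * MvPolynomial.C (μ I) *
      ∏ i, X i ^ I i

/-- The cubic `c_t = z_1³ + z_2³ + z_3³ + t·z_1z_2z_3`. -/
def ct (t : ℂ) : P3 := X 0 ^ 3 + X 1 ^ 3 + X 2 ^ 3 + MvPolynomial.C t * X 0 * X 1 * X 2

theorem pderiv_ofNat (i : Fin 3) (n : ℕ) [n.AtLeastTwo] :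
    pderiv i (ofNat(n) : P3) = 0 := by
  rw [← Nat.cast_ofNat (R := P3), (pderiv (R := ℂ) i).map_natCast]

theorem pderiv_zero_ct (t : ℂ) : pderiv 0 (ct t) = 3 * X 0 ^ 2 + C t * (X 1 * X 2) := by
  simp [ct, Derivation.leibniz, Derivation.leibniz_pow, pderiv_X]
  ring

theorem pderiv_one_ct (t : ℂ) : pderiv 1 (ct t) = 3 * X 1 ^ 2 + C t * (X 2 * X 0) := by
  simp [ct, Derivation.leibniz, Derivation.leibniz_pow, pderiv_X]
  ring

theorem pderiv_two_ct (t : ℂ) : pderiv 2 (ct t) = 3 * X 2 ^ 2 + C t * (X 0 * X 1) := by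
  simp [ct, Derivation.leibniz, Derivation.leibniz_pow, pderiv_X]
  ring

theorem hess3_ct (t : ℂ) :
    hess3 (ct t) = (216 + 2 * C t ^ 3) * (X 0 * X 1 * X 2) -
      6 * C t ^ 2 * (X 0 ^ 3 + X 1 ^ 3 + X 2 ^ 3) := by
  simp [hess3, Matrix.det_fin_three, pderiv_zero_ct, pderiv_one_ct, pderiv_two_ct,
    Derivation.leibniz, Derivation.leibniz_pow, pderiv_X, pderiv_ofNat]
  ring

theorem jac3_ct (t : ℂ) :
    jac3 (ct t) = Ideal.span {3 * X 0 ^ 2 + C t * (X 1 * X 2), 3 * X 1 ^ 2 + C t * (X 2 * X 0),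
      3 * X 2 ^ 2 + C t * (X 0 * X 1)} := by
  rw [jac3, pderiv_zero_ct, pderiv_one_ct, pderiv_two_ct]

theorem partial_zero_mem (t : ℂ) : 3 * X 0 ^ 2 + C t * (X 1 * X 2) ∈ jac3 (ct t) := by
  rw [jac3_ct]; exact Ideal.subset_span (by simp)

theorem partial_one_mem (t : ℂ) : 3 * X 1 ^ 2 + C t * (X 2 * X 0) ∈ jac3 (ct t) := by
  rw [jac3_ct]; exact Ideal.subset_span (by simp)

theorem partial_two_mem (t : ℂ) : 3 * X 2 ^ 2 + C t * (X 0 * X 1) ∈ jac3 (ct t) := by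
  rw [jac3_ct]; exact Ideal.subset_span (by simp)

theorem mem_of_C_mul_mem {J : Ideal P3} {c : ℂ} (hc : c ≠ 0) {p : P3} (h : C c * p ∈ J) :
    p ∈ J := by
  have := J.mul_mem_left (C c⁻¹) h
  rwa [← mul_assoc, ← C_mul, inv_mul_cancel₀ hc, C_1, one_mul] at this

/-- The relations `3a² + t bc`, `3b² + t ca`, `3c² + t ab` are permuted among themselves by
permutations of `a, b, c`, so this covers all six monomials of the form `a²b`. -/
theorem sq_mul_mem {t : ℂ} (ht : t ^ 3 + 27 ≠ 0) {J : Ideal P3} {a b c : P3}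
    (ha : 3 * a ^ 2 + C t * (b * c) ∈ J) (hb : 3 * b ^ 2 + C t * (c * a) ∈ J)
    (hc : 3 * c ^ 2 + C t * (a * b) ∈ J) : a ^ 2 * b ∈ J := by
  refine mem_of_C_mul_mem ht ?_
  -- `(t³ + 27) a²b = 9b (3a² + t bc) - 3tc (3b² + t ca) + t²a (3c² + t ab)`
  have h := J.add_mem (J.sub_mem (J.mul_mem_left (9 * b) ha) (J.mul_mem_left (3 * C t * c) hb))
    (J.mul_mem_left (C t ^ 2 * a) hc)
  convert h using 1
  simp only [map_add, map_pow, map_ofNat]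
  ring

/-- `H_t ≡ 8 (t³ + 27) z_1z_2z_3` modulo `J_t`. -/
theorem hess3_sub_mem (t : ℂ) :
    C (8 * (t ^ 3 + 27)) * (X 0 * X 1 * X 2) - hess3 (ct t) ∈ jac3 (ct t) := by
  have h := Ideal.mul_mem_left _ (2 * C t ^ 2) (Ideal.add_mem _ (Ideal.add_mem _
    (Ideal.mul_mem_left _ (X 0) (partial_zero_mem t))
    (Ideal.mul_mem_left _ (X 1) (partial_one_mem t)))
    (Ideal.mul_mem_left _ (X 2) (partial_two_mem t)))
  convert h using 1
  rw [hess3_ct]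
  simp only [map_add, map_mul, map_pow, map_ofNat]
  ring

theorem xyz_sub_mem {t : ℂ} (ht : t ^ 3 + 27 ≠ 0) :
    X 0 * X 1 * X 2 - C (1 / (8 * (t ^ 3 + 27))) * hess3 (ct t) ∈ jac3 (ct t) := by
  have h := Ideal.mul_mem_left _ (C (1 / (8 * (t ^ 3 + 27)))) (hess3_sub_mem t)
  rwa [mul_sub, ← mul_assoc, ← C_mul,
    one_div_mul_cancel (mul_ne_zero (by norm_num) ht), C_1, one_mul] at h

theorem cube_add_mem {t : ℂ} (ht : t ^ 3 + 27 ≠ 0) (i : Fin 3) :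
    X i ^ 3 + C (t / (24 * (t ^ 3 + 27))) * hess3 (ct t) ∈ jac3 (ct t) := by
  have hi : 3 * X i ^ 3 + C t * (X 0 * X 1 * X 2) ∈ jac3 (ct t) := by
    fin_cases i
    · convert Ideal.mul_mem_left _ (X 0) (partial_zero_mem t) using 1
      simp only [Fin.zero_eta]; ring
    · convert Ideal.mul_mem_left _ (X 1) (partial_one_mem t) using 1
      simp only [Fin.mk_one]; ring
    · convert Ideal.mul_mem_left _ (X 2) (partial_two_mem t) using 1
      simp only [Fin.reduceFinMk]; ring
  refine mem_of_C_mul_mem (c := 3) (by norm_num) ?_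
  have h := Ideal.sub_mem _ hi (Ideal.mul_mem_left _ (C t) (xyz_sub_mem ht))
  convert h using 1
  have e : t / (24 * (t ^ 3 + 27)) * 3 = t * (1 / (8 * (t ^ 3 + 27))) := by
    field_simp; ring
  have e' := congrArg (C : ℂ → P3) e
  simp only [C_mul] at e'
  rw [mul_add, mul_left_comm, ← mul_assoc, e', map_ofNat]
  ring

/-- The functional `p ↦ (18 ∂_1∂_2∂_3 - t (∂_1³ + ∂_2³ + ∂_3³)) p (0)`. When
`t³ ≠ -27` it is, up to scale, the only functional on cubics that vanishes on the degree-three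
part of `J_t`. -/
def socle (t : ℂ) : P3 →ₗ[ℂ] ℂ where
  toFun p := eval 0 (18 * pderiv 0 (pderiv 1 (pderiv 2 p)) -
    C t * (pderiv 0 (pderiv 0 (pderiv 0 p)) + pderiv 1 (pderiv 1 (pderiv 1 p)) +
      pderiv 2 (pderiv 2 (pderiv 2 p))))
  map_add' p q := by simp; ring
  map_smul' c p := by simp; ring

theorem socle_eq_zero_of_mem (t : ℂ) {p : P3} (hp : p ∈ jac3 (ct t)) : socle t p = 0 := by
  rw [jac3_ct, Ideal.mem_span_insert] at hp
  obtain ⟨a, q, hq, rfl⟩ := hp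
  obtain ⟨b, c, rfl⟩ := Ideal.mem_span_pair.mp hq
  simp [socle, Derivation.leibniz, Derivation.leibniz_pow, pderiv_X, pderiv_ofNat]
  simp only [map_ofNat]
  ring

theorem socle_hess3 (t : ℂ) : socle t (hess3 (ct t)) = 144 * (t ^ 3 + 27) := by
  rw [hess3_ct]
  simp [socle, Derivation.leibniz, Derivation.leibniz_pow, pderiv_X, pderiv_ofNat]
  simp only [map_ofNat]
  ring

/-- Uniqueness of the scalars `μ_I`, because `H_t` does not lie in `J_t`. -/
theorem coeff_unique {t : ℂ} (ht : t ^ 3 + 27 ≠ 0) {p : P3} {a b : ℂ}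
    (ha : p - C a * hess3 (ct t) ∈ jac3 (ct t)) (hb : p - C b * hess3 (ct t) ∈ jac3 (ct t)) :
    a = b := by
  have h := socle_eq_zero_of_mem t (Ideal.sub_mem _ hb ha)
  rw [sub_sub_sub_cancel_left, ← sub_mul, ← C_sub, ← smul_eq_C_mul, map_smul, socle_hess3,
    smul_eq_mul] at h
  have h144 : (144 : ℂ) * (t ^ 3 + 27) ≠ 0 := mul_ne_zero (by norm_num) ht
  exact sub_eq_zero.mp ((mul_eq_zero.mp h).resolve_right h144)

theorem mixed_mem {t : ℂ} (ht : t ^ 3 + 27 ≠ 0) (I : Fin 3 → ℕ) (hI : ∑ i, I i = 3)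
    (h0 : I ≠ ![3, 0, 0]) (h1 : I ≠ ![0, 3, 0]) (h2 : I ≠ ![0, 0, 3]) (h3 : I ≠ ![1, 1, 1]) :
    ∏ i, X i ^ I i ∈ jac3 (ct t) := by
  have px := partial_zero_mem t
  have py := partial_one_mem t
  have pz := partial_two_mem t
  -- The same relations with the two factors of the product swapped, as needed to apply
  -- `sq_mul_mem` to odd permutations of the variables.
  have px' := mul_comm (X 1 : P3) (X 2) ▸ px
  have py' := mul_comm (X 2 : P3) (X 0) ▸ py
  have pz' := mul_comm (X 0 : P3) (X 1) ▸ pz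
  have hmem : I ∈ Finset.Nat.antidiagonalTuple 3 3 := Finset.Nat.mem_antidiagonalTuple.mpr hI
  rw [show Finset.Nat.antidiagonalTuple 3 3 = {![3, 0, 0], ![0, 3, 0], ![0, 0, 3], ![1, 1, 1],
    ![2, 1, 0], ![2, 0, 1], ![1, 2, 0], ![0, 2, 1], ![1, 0, 2], ![0, 1, 2]} by decide] at hmem
  simp only [Finset.mem_insert, Finset.mem_singleton, h0, h1, h2, h3, false_or] at hmem
  rcases hmem with rfl | rfl | rfl | rfl | rfl | rfl
  · simpa [Fin.prod_univ_three] using sq_mul_mem ht px py pz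
  · simpa [Fin.prod_univ_three] using sq_mul_mem ht px' pz' py'
  · simpa [Fin.prod_univ_three, mul_comm] using sq_mul_mem ht py' px' pz'
  · simpa [Fin.prod_univ_three] using sq_mul_mem ht py pz px
  · simpa [Fin.prod_univ_three, mul_comm] using sq_mul_mem ht pz px py
  · simpa [Fin.prod_univ_three, mul_comm] using sq_mul_mem ht pz' py' px'

/-- the explicit ideal membership relations for `c_t` (`t³ ≠ −27`), and
consequently the associated form of `c_t` is
`−(1/(24(t³+27)))·(t·z_1³ + t·z_2³ + t·z_3³ − 18·z_1z_2z_3)`. -/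
theorem assoc_form_of_ct (t : ℂ) (ht : t ^ 3 ≠ -27) :
    (∀ I : Fin 3 → ℕ, (∑ i, I i) = 3 →
      I ≠ ![3, 0, 0] → I ≠ ![0, 3, 0] → I ≠ ![0, 0, 3] → I ≠ ![1, 1, 1] →
      (∏ i, X i ^ I i) ∈ jac3 (ct t)) ∧
    (∀ i : Fin 3,
      X i ^ 3 + MvPolynomial.C (t / (24 * (t ^ 3 + 27))) * hess3 (ct t) ∈ jac3 (ct t)) ∧
    X 0 * X 1 * X 2 - MvPolynomial.C (1 / (8 * (t ^ 3 + 27))) * hess3 (ct t) ∈ jac3 (ct t) ∧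
    ∀ μ : (Fin 3 → ℕ) → ℂ,
      (∀ I : Fin 3 → ℕ, (∑ i, I i) = 3 →
        (∏ i, X i ^ I i) - MvPolynomial.C (μ I) * hess3 (ct t) ∈ jac3 (ct t)) →
      assocCubic μ =
        MvPolynomial.C (-(1 / (24 * (t ^ 3 + 27)))) *
          (MvPolynomial.C t * X 0 ^ 3 + MvPolynomial.C t * X 1 ^ 3 +
            MvPolynomial.C t * X 2 ^ 3 - MvPolynomial.C 18 * X 0 * X 1 * X 2) := by
  have hD : t ^ 3 + 27 ≠ 0 := fun h => ht (eq_neg_of_add_eq_zero_left h)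
  refine ⟨mixed_mem hD, cube_add_mem hD, xyz_sub_mem hD, fun μ hμ => ?_⟩
  have hcube (i : Fin 3) (I : Fin 3 → ℕ) (hI : ∑ j, I j = 3)
      (hX : ∏ j, X j ^ I j = (X i ^ 3 : P3)) : μ I = -(t / (24 * (t ^ 3 + 27))) := by
    refine coeff_unique hD (hμ I hI) ?_
    rw [hX, C_neg, neg_mul, sub_neg_eq_add]
    exact cube_add_mem hD i
  have m0 := hcube 0 ![3, 0, 0] (by decide) (by simp [Fin.prod_univ_three])
  have m1 := hcube 1 ![0, 3, 0] (by decide) (by simp [Fin.prod_univ_three])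
  have m2 := hcube 2 ![0, 0, 3] (by decide) (by simp [Fin.prod_univ_three])
  have m3 : μ ![1, 1, 1] = 1 / (8 * (t ^ 3 + 27)) := by
    refine coeff_unique hD (hμ _ (by decide)) ?_
    simpa [Fin.prod_univ_three] using xyz_sub_mem hD
  have hzero (I : Fin 3 → ℕ) (hI : I ∈ Finset.Nat.antidiagonalTuple 3 3)
      (hI' : I ∉ ({![3, 0, 0], ![0, 3, 0], ![0, 0, 3], ![1, 1, 1]} : Finset (Fin 3 → ℕ))) :
      μ I = 0 := by
    have hs := Finset.Nat.mem_antidiagonalTuple.mp hI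
    simp only [Finset.mem_insert, Finset.mem_singleton, not_or] at hI'
    refine coeff_unique hD (hμ I hs) ?_
    rw [C_0, zero_mul, sub_zero]
    exact mixed_mem hD I hs hI'.1 hI'.2.1 hI'.2.2.1 hI'.2.2.2
  rw [assocCubic, ← Finset.sum_subset
    (s₁ := {![3, 0, 0], ![0, 3, 0], ![0, 0, 3], ![1, 1, 1]}) (by decide)
    (fun I hI hI' => by rw [hzero I hI hI', C_0, mul_zero, zero_mul])]
  rw [Finset.sum_insert (by decide), Finset.sum_insert (by decide),
    Finset.sum_insert (by decide), Finset.sum_singleton, m0, m1, m2, m3]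
  have e1 : -(t / (24 * (t ^ 3 + 27))) = -(1 / (24 * (t ^ 3 + 27))) * t := by ring
  have e2 : 1 / (8 * (t ^ 3 + 27)) = -(1 / (24 * (t ^ 3 + 27))) * (-3) := by
    field_simp; norm_num
  rw [e1, e2]
  simp only [C_mul]
  simp [Fin.prod_univ_three, Nat.factorial]
  simp only [map_ofNat]
  ring

end
end

section
/- Let f = a·z_1⁴ + 4b·z_1³z_2 + 6c·z_1²z_2² + 4d·z_1z_2³ + e·z_2⁴ ∈ ℂ[z_1,z_2] be a binary quartic with Δ(f) ≠ 0, let μ_{ij} be scalars with z_1^i z_2^j − μ_{ij}·H(f) ∈ J(f), and let A_f be the associated quartic. Then the following identity of polynomials in ℂ[z_1,z_2] holds: Δ(f)·A_f(z_1,z_2) = (1/(2⁷·3³))·I2(f)·H(f)(−z_2, z_1) − (1/2⁴)·I3(f)·f(−z_2, z_1), where H(f)(−z_2,z_1) and f(−z_2,z_1) denote the polynomials obtained by substituting (z_1,z_2) ↦ (−z_2, z_1). -/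
/-!
If `Δ(f) ≠ 0`, the degree-four part of `J(f)` is spanned by the products of `z_1`, `z_2` with
`f_1`, `f_2`, and is a hyperplane in the space of binary quartics. The right-hand side of the
identity, read through the pairing `⟨z_1^i z_2^j, Σ (24/(k!·l!))·λ_{kl}·z_1^k z_2^l⟩ = λ_{ij}`,
is a linear functional `λ` on binary quartics. It is a contravariant that kills this hyperplane
(`lam_jac`) and takes the value `Δ(f)` on `H(f)` (`lam_hess`). Applying `λ` to
`z_1^i z_2^j − μ_{ij}·H(f) ∈ J(f)` gives `λ_{ij} = Δ(f)·μ_{ij}`, which is the identity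
coefficient by coefficient. Both properties of `λ` are polynomial identities in `a, b, c, d, e`.
-/

open MvPolynomial

noncomputable section

/-- Binary forms: polynomials in two variables over ℂ. -/
abbrev P2 := MvPolynomial (Fin 2) ℂ

/-- The coefficient of `z_1^i z_2^j` in a binary form. -/
def cf (f : P2) (i j : ℕ) : ℂ :=
  coeff (Finsupp.single 0 i + Finsupp.single 1 j) f

/-- The invariant `I2(f) = ae − 4bd + 3c²` of a binary quartic
`f = a·z_1⁴ + 4b·z_1³z_2 + 6c·z_1²z_2² + 4d·z_1z_2³ + e·z_2⁴`. -/
def I2 (f : P2) : ℂ :=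
  cf f 4 0 * cf f 0 4 - 4 * (cf f 3 1 / 4) * (cf f 1 3 / 4) + 3 * (cf f 2 2 / 6) ^ 2

/-- The invariant `I3(f) = ace + 2bcd − ad² − b²e − c³` (the catalecticant). -/
def I3 (f : P2) : ℂ :=
  cf f 4 0 * (cf f 2 2 / 6) * cf f 0 4 +
    2 * (cf f 3 1 / 4) * (cf f 2 2 / 6) * (cf f 1 3 / 4) -
    cf f 4 0 * (cf f 1 3 / 4) ^ 2 - (cf f 3 1 / 4) ^ 2 * cf f 0 4 - (cf f 2 2 / 6) ^ 3

/-- The discriminant `Δ(f) = I2(f)³ − 27·I3(f)²` of a binary quartic. -/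
def disc (f : P2) : ℂ := I2 f ^ 3 - 27 * I3 f ^ 2

/-- The Hessian determinant `H(f) = f_{11}f_{22} − f_{12}²`. -/
def hess (f : P2) : P2 :=
  pderiv 0 (pderiv 0 f) * pderiv 1 (pderiv 1 f) - pderiv 0 (pderiv 1 f) ^ 2

/-- The Jacobian ideal `J(f) = (f_1, f_2)`. -/
def jac (f : P2) : Ideal P2 := Ideal.span {pderiv 0 f, pderiv 1 f}

/-- The binary quartic `a·z_1⁴ + 4b·z_1³z_2 + 6c·z_1²z_2² + 4d·z_1z_2³ + e·z_2⁴`. -/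
def quartic (a b c d e : ℂ) : P2 :=
  MvPolynomial.C a * X 0 ^ 4 + MvPolynomial.C (4 * b) * X 0 ^ 3 * X 1 +
    MvPolynomial.C (6 * c) * X 0 ^ 2 * X 1 ^ 2 + MvPolynomial.C (4 * d) * X 0 * X 1 ^ 3 +
    MvPolynomial.C e * X 1 ^ 4

/-- The associated quartic `A_f := Σ_{i+j=4} (24/(i!·j!))·μ_{ij}·z_1^i z_2^j`
built from scalars `μ_{ij}`. -/
def assocQuartic (μ : ℕ → ℕ → ℂ) : P2 :=
  ∑ i ∈ Finset.range 5,
    MvPolynomial.C ((24 : ℂ) / ((i.factorial : ℂ) * ((4 - i).factorial : ℂ))) *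
      MvPolynomial.C (μ i (4 - i)) * X 0 ^ i * X 1 ^ (4 - i)

/-- The substitution `(z_1, z_2) ↦ (−z_2, z_1)`, i.e. `g ↦ g(−z_2, z_1)`. -/
def twist (g : P2) : P2 := aeval ![-(X 1 : P2), X 0] g

lemma cf_add (p q : P2) (m n : ℕ) : cf (p + q) m n = cf p m n + cf q m n := coeff_add _ _ _

lemma cf_sub (p q : P2) (m n : ℕ) : cf (p - q) m n = cf p m n - cf q m n :=
  coeff_sub _ _ _ _

lemma cf_C_mul (r : ℂ) (p : P2) (m n : ℕ) : cf (MvPolynomial.C r * p) m n = r * cf p m n :=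
  coeff_C_mul _ _ _

lemma term_eq_monomial (r : ℂ) (i j : ℕ) :
    (MvPolynomial.C r * X 0 ^ i * X 1 ^ j : P2) =
      monomial (Finsupp.single 0 i + Finsupp.single 1 j) r := by
  rw [X_pow_eq_monomial, X_pow_eq_monomial, C_mul_monomial, monomial_mul]
  simp

lemma cf_mul_term (p : P2) (r : ℂ) (i j m n : ℕ) :
    cf (p * (MvPolynomial.C r * X 0 ^ i * X 1 ^ j)) m n =
      if i ≤ m ∧ j ≤ n then cf p (m - i) (n - j) * r else 0 := by
  have hle : (Finsupp.single (0 : Fin 2) i + Finsupp.single 1 j ≤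
      Finsupp.single 0 m + Finsupp.single 1 n) ↔ i ≤ m ∧ j ≤ n := by
    simp [Finsupp.le_def, Fin.forall_fin_two]
  have hsub : (Finsupp.single (0 : Fin 2) m + Finsupp.single 1 n) -
      (Finsupp.single 0 i + Finsupp.single 1 j) =
      Finsupp.single 0 (m - i) + Finsupp.single 1 (n - j) := by
    ext k
    fin_cases k <;> simp
  simp only [cf, term_eq_monomial, coeff_mul_monomial', hle, hsub]

lemma cf_term (r : ℂ) (i j m n : ℕ) :
    cf (MvPolynomial.C r * X 0 ^ i * X 1 ^ j) m n = if i = m ∧ j = n then r else 0 := by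
  have h : (Finsupp.single (0 : Fin 2) i + Finsupp.single 1 j =
      Finsupp.single 0 m + Finsupp.single 1 n) ↔ i = m ∧ j = n := by
    simp [Finsupp.ext_iff, Fin.forall_fin_two]
  simp only [cf, term_eq_monomial, coeff_monomial, h]

lemma cf_X_pow (i j m n : ℕ) :
    cf (X 0 ^ i * X 1 ^ j) m n = if i = m ∧ j = n then 1 else 0 := by
  simpa using cf_term 1 i j m n

lemma quartic_eq_terms (a b c d e : ℂ) : quartic a b c d e =
    MvPolynomial.C a * X 0 ^ 4 * X 1 ^ 0 + MvPolynomial.C (4 * b) * X 0 ^ 3 * X 1 ^ 1 +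
    MvPolynomial.C (6 * c) * X 0 ^ 2 * X 1 ^ 2 + MvPolynomial.C (4 * d) * X 0 ^ 1 * X 1 ^ 3 +
    MvPolynomial.C e * X 0 ^ 0 * X 1 ^ 4 := by
  simp [quartic]

/-- The binary cubic `4·(a·z_1³ + 3b·z_1²z_2 + 3c·z_1z_2² + d·z_2³)`, the common shape of the two
partial derivatives of a quartic. -/
def cubic (a b c d : ℂ) : P2 :=
  MvPolynomial.C (4 * a) * X 0 ^ 3 * X 1 ^ 0 + MvPolynomial.C (12 * b) * X 0 ^ 2 * X 1 ^ 1 +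
    MvPolynomial.C (12 * c) * X 0 ^ 1 * X 1 ^ 2 + MvPolynomial.C (4 * d) * X 0 ^ 0 * X 1 ^ 3

lemma pderiv_zero_quartic (a b c d e : ℂ) : pderiv 0 (quartic a b c d e) = cubic a b c d := by
  simp only [quartic, cubic, map_add, Derivation.leibniz, Derivation.leibniz_pow, pderiv_C,
    pderiv_X_self, pderiv_X_of_ne (show (1 : Fin 2) ≠ 0 by decide), smul_eq_mul, nsmul_eq_mul]
  apply MvPolynomial.funext
  intro x
  simp
  ring

lemma pderiv_one_quartic (a b c d e : ℂ) : pderiv 1 (quartic a b c d e) = cubic b c d e := by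
  simp only [quartic, cubic, map_add, Derivation.leibniz, Derivation.leibniz_pow, pderiv_C,
    pderiv_X_self, pderiv_X_of_ne (show (0 : Fin 2) ≠ 1 by decide), smul_eq_mul, nsmul_eq_mul]
  apply MvPolynomial.funext
  intro x
  simp
  ring

lemma hess_quartic (a b c d e : ℂ) : hess (quartic a b c d e) =
    quartic (144 * (a * c - b ^ 2)) (72 * (a * d - b * c))
      (24 * (a * e + 2 * b * d - 3 * c ^ 2)) (72 * (b * e - c * d)) (144 * (c * e - d ^ 2)) := by
  rw [hess, pderiv_zero_quartic, pderiv_one_quartic]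
  simp only [quartic, cubic, map_add, Derivation.leibniz, Derivation.leibniz_pow, pderiv_C,
    pderiv_X_self, pderiv_X_of_ne (show (0 : Fin 2) ≠ 1 by decide),
    pderiv_X_of_ne (show (1 : Fin 2) ≠ 0 by decide), smul_eq_mul, nsmul_eq_mul]
  apply MvPolynomial.funext
  intro x
  simp
  ring

lemma I2_quartic (a b c d e : ℂ) : I2 (quartic a b c d e) = a * e - 4 * b * d + 3 * c ^ 2 := by
  simp only [I2, quartic_eq_terms, cf_add, cf_term]
  norm_num

lemma I3_quartic (a b c d e : ℂ) : I3 (quartic a b c d e) =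
    a * c * e + 2 * b * c * d - a * d ^ 2 - b ^ 2 * e - c ^ 3 := by
  simp only [I3, quartic_eq_terms, cf_add, cf_term]
  norm_num

/-- The linear functional on binary quartics, extended to all polynomials through their degree-four
part, that represents `(1/(2⁷·3³))·I2·H(−z_2, z_1) − (1/2⁴)·I3·f(−z_2, z_1)` under the pairing of
`z_1^i z_2^j` with `(24/(i!·j!))·z_1^i z_2^j`. -/
def lam (a b c d e : ℂ) (g : P2) : ℂ :=
  let i2 := a * e - 4 * b * d + 3 * c ^ 2
  let i3 := a * c * e + 2 * b * c * d - a * d ^ 2 - b ^ 2 * e - c ^ 3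
  (i2 * (c * e - d ^ 2) / 24 - i3 * e / 16) * cf g 4 0 +
    (-(i2 * (b * e - c * d)) / 48 + i3 * d / 16) * cf g 3 1 +
    (i2 * (a * e + 2 * b * d - 3 * c ^ 2) / 144 - i3 * c / 16) * cf g 2 2 +
    (-(i2 * (a * d - b * c)) / 48 + i3 * b / 16) * cf g 1 3 +
    (i2 * (a * c - b ^ 2) / 24 - i3 * a / 16) * cf g 0 4

lemma lam_jac (a b c d e : ℂ) (g : P2) (hg : g ∈ jac (quartic a b c d e)) :
    lam a b c d e g = 0 := by
  rw [jac, pderiv_zero_quartic, pderiv_one_quartic, Ideal.mem_span_pair] at hg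
  obtain ⟨p, q, rfl⟩ := hg
  simp only [lam, cubic, mul_add, cf_add, cf_mul_term]
  norm_num
  ring

lemma lam_hess (a b c d e : ℂ) :
    lam a b c d e (hess (quartic a b c d e)) = disc (quartic a b c d e) := by
  rw [hess_quartic, disc, I2_quartic, I3_quartic]
  simp only [lam, quartic_eq_terms, cf_add, cf_term]
  norm_num
  ring

lemma lam_sub_C_mul (a b c d e r : ℂ) (p q : P2) :
    lam a b c d e (p - MvPolynomial.C r * q) = lam a b c d e p - r * lam a b c d e q := by
  simp only [lam, cf_sub, cf_C_mul]
  ring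

/-- the contravariant identity for binary quartics:
`Δ(f)·A_f(z_1,z_2) = (1/(2⁷·3³))·I2(f)·H(f)(−z_2,z_1) − (1/2⁴)·I3(f)·f(−z_2,z_1)`. -/
theorem contravariant_identity_quartic (a b c d e : ℂ) (f : P2)
    (hf : f = quartic a b c d e) (hΔ : disc f ≠ 0)
    (μ : ℕ → ℕ → ℂ)
    (hμ : ∀ i j : ℕ, i + j = 4 →
      X 0 ^ i * X 1 ^ j - MvPolynomial.C (μ i j) * hess f ∈ jac f) :
    MvPolynomial.C (disc f) * assocQuartic μ =
      MvPolynomial.C (1 / (2 ^ 7 * 3 ^ 3) * I2 f) * twist (hess f) -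
        MvPolynomial.C (1 / 2 ^ 4 * I3 f) * twist f := by
  subst hf
  have key : ∀ i j : ℕ, i + j = 4 →
      lam a b c d e (X 0 ^ i * X 1 ^ j) = μ i j * disc (quartic a b c d e) := by
    intro i j hij
    have h := lam_jac a b c d e _ (hμ i j hij)
    rw [lam_sub_C_mul, lam_hess] at h
    exact sub_eq_zero.mp h
  have h40 := key 4 0 rfl
  have h31 := key 3 1 rfl
  have h22 := key 2 2 rfl
  have h13 := key 1 3 rfl
  have h04 := key 0 4 rfl
  simp only [lam, cf_X_pow] at h40 h31 h22 h13 h04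
  norm_num at h40 h31 h22 h13 h04
  rw [hess_quartic, I2_quartic, I3_quartic]
  generalize disc (quartic a b c d e) = D at *
  apply MvPolynomial.funext
  intro x
  simp [assocQuartic, Finset.sum_range_succ, Nat.factorial, twist, quartic]
  -- The weights are the multinomial coefficients `24/(i!·j!)` of `A_f`.
  linear_combination -(x 0 ^ 4) * h40 - 4 * x 0 ^ 3 * x 1 * h31 -
    6 * x 0 ^ 2 * x 1 ^ 2 * h22 - 4 * x 0 * x 1 ^ 3 * h13 - x 1 ^ 4 * h04

end
end
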